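/- If L ∈ Gr(V,m) satisfies L ∩ int(K) ≠ ∅, then σ(L) = min_{v∈K, |||v|||=1} max_{x∈L, ‖x‖=1} λ_v(x) = min{‖u−y‖* : v ∈ K, y ∈ L^⊥, u ∈ K*, |||v||| = 1, ⟨u,v⟩ = 1}. -/

import Mathlib

/-!
Fix `v ∈ K` with `|||v||| = 1`. The maximum `s` of `λ_v` over the unit ball (or the unit sphere)
of `L` is characterised by: `x ∈ L` and `x - t v ∈ K` imply `t ≤ s ‖x‖`. Its dual is the minimum of
`‖u - y‖*` over `u ∈ K*` with `⟨u, v⟩ = 1` and `y ∈ L^⊥`, and both claims follow from strong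
duality between these two problems (`isLeast_sSup_lambdaVec`) by minimising over `v`.

Weak duality (`weak_duality`) is the chain `t = ⟨u, t v⟩ ≤ ⟨u, x⟩ = ⟨u - y, x⟩ ≤ ‖u - y‖* ‖x‖`.
For attainment (`exists_dual_functional`), the convex cone `{x - t v : x ∈ L, s ‖x‖ < t}` misses
the interior of `K`; a separating functional is nonnegative on `K`, and it is positive at `v`
because `L` meets the interior of `K`, so it can be scaled to some `u ∈ K*` with `⟨u, v⟩ = 1` and
`⟨u, ·⟩ ≤ s ‖·‖` on `L`. Hahn–Banach extends `⟨u, ·⟩|_L` to `⟨w, ·⟩ ≤ s ‖·‖` on `V`, and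
`y = u - w` lies in `L^⊥`.

The real supremum of an empty set is `0`, so `lambdaVec K v x = 0` where `λ_v(x) = -∞`; this does
not affect the maxima, because `s ≥ 0`.
-/

open Module RealInnerProductSpace

/-- `N` is a norm on the real vector space `V`. -/
structure IsNorm (V : Type*) [AddCommGroup V] [Module ℝ V] (N : V → ℝ) : Prop where
  nonneg : ∀ x, 0 ≤ N x
  eq_zero_iff : ∀ x, N x = 0 ↔ x = 0
  smul_eq : ∀ (c : ℝ) (x : V), N (c • x) = |c| * N x
  add_le : ∀ x y, N (x + y) ≤ N x + N y

/-- `K` is a regular closed convex cone: closed, convex, a cone, pointed and solid. -/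
structure IsRegularCone (V : Type*) [NormedAddCommGroup V] [InnerProductSpace ℝ V]
    (K : Set V) : Prop where
  closed : IsClosed K
  convex : Convex ℝ K
  smul_mem : ∀ ⦃c : ℝ⦄, 0 < c → ∀ ⦃x⦄, x ∈ K → c • x ∈ K
  pointed : K ∩ (-K) = {0}
  solid : (interior K).Nonempty

variable {V : Type*} [NormedAddCommGroup V] [InnerProductSpace ℝ V]

/-- The dual norm of `N` with respect to the inner product of `V`. -/
noncomputable def dualNorm (N : V → ℝ) (u : V) : ℝ :=
  sSup {r : ℝ | ∃ x : V, N x = 1 ∧ r = ⟪u, x⟫}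

/-- The dual cone of `K`. -/
def dualCone (K : Set V) : Set V := {u : V | ∀ x ∈ K, 0 ≤ ⟪u, x⟫}

/-- `dist(L1,L2) = max_{x ∈ L1, x ≠ 0} min_{v ∈ L2} |||x - v||| / ‖x‖`,
with `‖·‖ = N` and `|||·||| = N'`. -/
noncomputable def grDist (N N' : V → ℝ) (L1 L2 : Submodule ℝ V) : ℝ :=
  sSup {d : ℝ | ∃ x ∈ L1, x ≠ 0 ∧ d = sInf {c : ℝ | ∃ v ∈ L2, c = N' (x - v) / N x}}

/-- `odist(L1,L2) = max_{x ∈ L1, x ≠ 0} inf_{v ∈ L2, v ≠ 0} |||x - v||| / ‖v‖`. -/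
noncomputable def grOdist (N N' : V → ℝ) (L1 L2 : Submodule ℝ V) : ℝ :=
  sSup {d : ℝ | ∃ x ∈ L1, x ≠ 0 ∧
    d = sInf {c : ℝ | ∃ v ∈ L2, v ≠ 0 ∧ c = N' (x - v) / N v}}

/-- The set `Σ_m` of ill-posed `m`-dimensional subspaces. -/
def SigmaIll (K : Set V) (m : ℕ) : Set (Submodule ℝ V) :=
  {L | finrank ℝ L = m ∧ (L : Set V) ∩ K ≠ {0} ∧ (Lᗮ : Set V) ∩ dualCone K ≠ {0}}

/-- `dist(L, Σ_m) = inf_{L' ∈ Σ_m} dist(L, L')`. -/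
noncomputable def distToIll (N N' : V → ℝ) (K : Set V) (m : ℕ) (L : Submodule ℝ V) : ℝ :=
  sInf {d : ℝ | ∃ L' ∈ SigmaIll K m, d = grDist N N' L L'}

/-- `odist(Σ_m, L) = inf_{L' ∈ Σ_m} odist(L', L)`. -/
noncomputable def odistToIll (N N' : V → ℝ) (K : Set V) (m : ℕ) (L : Submodule ℝ V) : ℝ :=
  sInf {d : ℝ | ∃ L' ∈ SigmaIll K m, d = grOdist N N' L' L}

/-- `ν(L) = min {‖y - u‖* : u ∈ K*, y ∈ L^⊥, |||u|||* = 1}`. -/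
noncomputable def nu (N N' : V → ℝ) (K : Set V) (L : Submodule ℝ V) : ℝ :=
  sInf {r : ℝ | ∃ u ∈ dualCone K, ∃ y ∈ Lᗮ, dualNorm N' u = 1 ∧ r = dualNorm N (y - u)}

/-- `ν̄(L) = min {|||v - x||| : v ∈ K, x ∈ L, ‖x‖ = 1}`. -/
noncomputable def nubar (N N' : V → ℝ) (K : Set V) (L : Submodule ℝ V) : ℝ :=
  sInf {r : ℝ | ∃ v ∈ K, ∃ x ∈ L, N x = 1 ∧ r = N' (v - x)}

/-- `λ_v(x) = sup {t : x - t v ∈ K}`. -/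
noncomputable def lambdaVec (K : Set V) (v x : V) : ℝ := sSup {t : ℝ | x - t • v ∈ K}

/-- `σ(L) = min_{v ∈ K, |||v||| = 1} max_{x ∈ L, ‖x‖ ≤ 1} λ_v(x)`. -/
noncomputable def sigmaMeas (N N' : V → ℝ) (K : Set V) (L : Submodule ℝ V) : ℝ :=
  sInf {r : ℝ | ∃ v ∈ K, N' v = 1 ∧
    r = sSup {c : ℝ | ∃ x ∈ L, N x ≤ 1 ∧ c = lambdaVec K v x}}

/-- `Sym(L) = min_{v ∈ K, ‖v‖ = 1} sup {t ≥ 0 : ∃ x ∈ K, ‖x‖ ≤ 1, x + t v ∈ L}`. -/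
noncomputable def symMeas (N : V → ℝ) (K : Set V) (L : Submodule ℝ V) : ℝ :=
  sInf {r : ℝ | ∃ v ∈ K, N v = 1 ∧
    r = sSup {t : ℝ | 0 ≤ t ∧ ∃ x ∈ K, N x ≤ 1 ∧ x + t • v ∈ L}}

/-- The norm `‖·‖_e` induced by the pair `(K, e)`. -/
noncomputable def inducedNorm (K : Set V) (e : V) (x : V) : ℝ :=
  sInf {α : ℝ | 0 ≤ α ∧ x + α • e ∈ K ∧ -x + α • e ∈ K}

/-! ### Norms on a finite-dimensional space and their duals -/

namespace IsNorm

variable {N : V → ℝ}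

lemma map_zero (hN : IsNorm V N) : N 0 = 0 := (hN.eq_zero_iff 0).2 rfl

lemma pos (hN : IsNorm V N) {x : V} (hx : x ≠ 0) : 0 < N x :=
  lt_of_le_of_ne (hN.nonneg x) fun h => hx ((hN.eq_zero_iff x).1 h.symm)

lemma map_inv_smul (hN : IsNorm V N) {x : V} (hx : x ≠ 0) : N ((N x)⁻¹ • x) = 1 := by
  rw [hN.smul_eq, abs_of_pos (inv_pos.2 (hN.pos hx)), inv_mul_cancel₀ (hN.pos hx).ne']

lemma convexOn (hN : IsNorm V N) : ConvexOn ℝ Set.univ N := by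
  refine ⟨convex_univ, fun x _ y _ a b ha hb _ => ?_⟩
  have := hN.add_le (a • x) (b • y)
  rwa [hN.smul_eq, hN.smul_eq, abs_of_nonneg ha, abs_of_nonneg hb] at this

variable [FiniteDimensional ℝ V]

/-- A norm on a finite-dimensional space dominates the ambient one: it is convex, hence
continuous, hence bounded away from `0` on the compact unit sphere. -/
lemma exists_norm_le (hN : IsNorm V N) : ∃ C : ℝ, ∀ x, ‖x‖ ≤ C * N x := by
  have hc : Continuous N :=
    continuousOn_univ.1 (hN.convexOn.continuousOn isOpen_univ)
  rcases subsingleton_or_nontrivial V with h | h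
  · exact ⟨0, fun x => by simp [Subsingleton.elim x 0]⟩
  obtain ⟨z, hz, hmin⟩ := (isCompact_sphere (0 : V) 1).exists_isMinOn
    (NormedSpace.sphere_nonempty.2 zero_le_one) hc.continuousOn
  have hz0 : z ≠ 0 := by
    rintro rfl
    simp at hz
  refine ⟨(N z)⁻¹, fun x => ?_⟩
  rcases eq_or_ne x 0 with rfl | hx
  · simp [hN.map_zero]
  have hx' : 0 < ‖x‖ := norm_pos_iff.2 hx
  have h1 : N z ≤ N (‖x‖⁻¹ • x) := hmin (by simp [norm_smul, hx'.ne'])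
  rw [hN.smul_eq, abs_of_pos (inv_pos.2 hx'), inv_mul_eq_div, le_div_iff₀ hx'] at h1
  rw [inv_mul_eq_div, le_div_iff₀ (hN.pos hz0)]
  linarith

lemma inner_le_dualNorm (hN : IsNorm V N) (u x : V) : ⟪u, x⟫ ≤ dualNorm N u * N x := by
  rcases eq_or_ne x 0 with rfl | hx
  · simp [hN.map_zero]
  obtain ⟨C, hC⟩ := hN.exists_norm_le
  have hb : BddAbove {r : ℝ | ∃ x : V, N x = 1 ∧ r = ⟪u, x⟫} := by
    refine ⟨‖u‖ * C, ?_⟩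
    rintro _ ⟨z, hz, rfl⟩
    have := hC z
    rw [hz, mul_one] at this
    exact (real_inner_le_norm u z).trans (by gcongr)
  have := le_csSup hb ⟨_, hN.map_inv_smul hx, rfl⟩
  rw [real_inner_smul_right, inv_mul_eq_div, div_le_iff₀ (hN.pos hx)] at this
  exact this

lemma dualNorm_nonneg (hN : IsNorm V N) (u : V) : 0 ≤ dualNorm N u := by
  rcases subsingleton_or_nontrivial V with h | h
  · refine Real.sSup_nonneg ?_
    rintro _ ⟨x, _, rfl⟩
    simp [Subsingleton.elim x 0]
  obtain ⟨x, hx⟩ := exists_ne (0 : V)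
  have h1 := hN.inner_le_dualNorm u x
  have h2 := hN.inner_le_dualNorm u (-x)
  have h3 : N (-x) = N x := by simpa using hN.smul_eq (-1) x
  rw [inner_neg_right, h3] at h2
  have : 0 ≤ dualNorm N u * N x := by linarith
  exact nonneg_of_mul_nonneg_left this (hN.pos hx)

end IsNorm

/-! ### Duality for a fixed direction in the cone -/

section Duality

variable {N : V → ℝ} {K : Set V}

lemma IsRegularCone.zero_mem (hK : IsRegularCone V K) : (0 : V) ∈ K := by
  have : (0 : V) ∈ K ∩ (-K) := by rw [hK.pointed]; rfl
  exact this.1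

open Pointwise in
lemma IsRegularCone.smul_mem_interior (hK : IsRegularCone V K) {c : ℝ} (hc : 0 < c) {x : V}
    (hx : x ∈ interior K) : c • x ∈ interior K := by
  have h : c • interior K ⊆ interior K := by
    rw [← interior_smul₀ hc.ne']
    apply interior_mono
    rintro _ ⟨y, hy, rfl⟩
    exact hK.smul_mem hc hy
  exact h (Set.smul_mem_smul_set hx)

variable [FiniteDimensional ℝ V]

/-- Since `-v ∉ K`, some element of the dual cone is positive at `v`, so it can be normalised. -/
lemma IsRegularCone.exists_dual (hK : IsRegularCone V K) {v : V} (hv : v ∈ K) (hv0 : v ≠ 0) :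
    ∃ u ∈ dualCone K, ⟪u, v⟫ = 1 := by
  have hnv : -v ∉ K := fun h => by
    have : v ∈ K ∩ (-K) := ⟨hv, h⟩
    rw [hK.pointed] at this
    exact hv0 this
  obtain ⟨f, c, hfv, hfK⟩ := geometric_hahn_banach_point_closed hK.convex hK.closed hnv
  have hc : c < 0 := by simpa using hfK 0 hK.zero_mem
  have hfv' : 0 < f v := by
    rw [map_neg] at hfv
    linarith
  have hpos : ∀ x ∈ K, 0 ≤ f x := by
    intro x hx
    by_contra! h
    have := hfK _ (hK.smul_mem (div_pos_of_neg_of_neg hc h) hx)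
    rw [map_smul, smul_eq_mul, div_mul_cancel₀ _ h.ne] at this
    exact lt_irrefl _ this
  refine ⟨(f v)⁻¹ • (InnerProductSpace.toDual ℝ V).symm f, fun x hx => ?_, ?_⟩
  · rw [real_inner_smul_left, InnerProductSpace.toDual_symm_apply]
    exact mul_nonneg (inv_nonneg.2 hfv'.le) (hpos x hx)
  · rw [real_inner_smul_left, InnerProductSpace.toDual_symm_apply, inv_mul_cancel₀ hfv'.ne']

lemma weak_duality (hN : IsNorm V N) {L : Submodule ℝ V} {u v x y : V} {t : ℝ}
    (hu : u ∈ dualCone K) (huv : ⟪u, v⟫ = 1) (hy : y ∈ Lᗮ) (hx : x ∈ L)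
    (ht : x - t • v ∈ K) : t ≤ dualNorm N (u - y) * N x := by
  have h1 := hu _ ht
  rw [inner_sub_right, real_inner_smul_right, huv] at h1
  have h2 := hN.inner_le_dualNorm (u - y) x
  rw [inner_sub_left, Submodule.inner_left_of_mem_orthogonal hx hy] at h2
  linarith

/-- Attainment in the dual problem: a bound `s` on the primal problem is certified by a dual
feasible pair `(u, y)`. -/
lemma exists_dual_functional (hN : IsNorm V N) (hK : IsRegularCone V K) {L : Submodule ℝ V}
    {e v : V} (heL : e ∈ L) (heK : e ∈ interior K) {s : ℝ} (hs : 0 ≤ s)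
    (key : ∀ x ∈ L, ∀ t : ℝ, x - t • v ∈ K → t ≤ s * N x) :
    ∃ y ∈ Lᗮ, ∃ u ∈ dualCone K, ⟪u, v⟫ = 1 ∧ dualNorm N (u - y) ≤ s := by
  set A : Set V := {z | ∃ x ∈ L, ∃ t : ℝ, s * N x < t ∧ z = x - t • v} with hA
  have hAconv : Convex ℝ A := by
    refine convex_iff_forall_pos.2 ?_
    rintro _ ⟨x, hx, t, ht, rfl⟩ _ ⟨x', hx', t', ht', rfl⟩ a b ha hb _
    refine ⟨a • x + b • x', L.add_mem (L.smul_mem _ hx) (L.smul_mem _ hx'), a * t + b * t', ?_, ?_⟩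
    · have h1 := hN.add_le (a • x) (b • x')
      rw [hN.smul_eq, hN.smul_eq, abs_of_pos ha, abs_of_pos hb] at h1
      have h2 := mul_le_mul_of_nonneg_left h1 hs
      have h3 := mul_lt_mul_of_pos_left ht ha
      have h4 := mul_lt_mul_of_pos_left ht' hb
      linarith
    · module
  have hAsmul : ∀ r : ℝ, 0 < r → ∀ z ∈ A, r • z ∈ A := by
    rintro r hr _ ⟨x, hx, t, ht, rfl⟩
    refine ⟨r • x, L.smul_mem _ hx, r * t, ?_, by module⟩
    rw [hN.smul_eq, abs_of_pos hr]
    have := mul_lt_mul_of_pos_left ht hr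
    linarith
  have hdisj : Disjoint (interior K) A := by
    rw [Set.disjoint_left]
    rintro _ hz ⟨x, hx, t, ht, rfl⟩
    exact absurd (key x hx t (interior_subset hz)) (not_le.2 ht)
  obtain ⟨f, c, hfK, hfA⟩ :=
    geometric_hahn_banach_open hK.convex.interior isOpen_interior hAconv hdisj
  -- Both sets are cones, so the separating constant `c` is `0`. Here `f ≤ 0` on `K`, and the final
  -- division by `f v < 0` reverses the sign.
  have hc0 : 0 ≤ c := by
    by_contra! h
    have hfe : f e < 0 := (hfK e heK).trans h
    have := hfK _ (hK.smul_mem_interior (div_pos_of_neg_of_neg h hfe) heK)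
    rw [map_smul, smul_eq_mul, div_mul_cancel₀ _ hfe.ne] at this
    exact lt_irrefl _ this
  have hvA : -v ∈ A := ⟨0, L.zero_mem, 1, by simp [hN.map_zero], by simp⟩
  have hc1 : c ≤ 0 := by
    by_contra! h
    have hfv : 0 < f (-v) := h.trans_le (hfA _ hvA)
    have := hfA _ (hAsmul (c / 2 / f (-v)) (by positivity) _ hvA)
    rw [map_smul, smul_eq_mul, div_mul_cancel₀ _ hfv.ne'] at this
    linarith
  have hK0 : ∀ x ∈ K, f x ≤ 0 := by
    have hcl : K ⊆ closure (interior K) := by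
      rw [hK.convex.closure_interior_eq_closure_of_nonempty_interior hK.solid]
      exact subset_closure
    have hsub : closure (interior K) ⊆ {x | f x ≤ 0} :=
      closure_minimal (fun x hx => (hfK x hx).le.trans hc1)
        (isClosed_le f.continuous continuous_const)
    exact fun x hx => hsub (hcl hx)
  have hfL : ∀ x ∈ L, ∀ t : ℝ, s * N x < t → t * f v ≤ f x := by
    intro x hx t ht
    have := hc0.trans (hfA _ ⟨x, hx, t, ht, rfl⟩)
    rw [map_sub, map_smul, smul_eq_mul] at this
    linarith
  have hfv : f v < 0 := by
    have h0 : 0 ≤ s * N e := mul_nonneg hs (hN.nonneg e)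
    have h1 := hfL e heL (s * N e + 1) (by linarith)
    have h2 := (hfK e heK).trans_le hc1
    by_contra! h
    have : 0 ≤ (s * N e + 1) * f v := by positivity
    linarith
  set u : V := (f v)⁻¹ • (InnerProductSpace.toDual ℝ V).symm f with hu
  have hux : ∀ x, ⟪u, x⟫ = (f v)⁻¹ * f x := fun x => by
    rw [hu, real_inner_smul_left, InnerProductSpace.toDual_symm_apply]
  have huL : ∀ x ∈ L, ⟪u, x⟫ ≤ s * N x := by
    intro x hx
    refine le_of_forall_gt fun t ht => ?_
    obtain ⟨t', ht1, ht2⟩ := exists_between ht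
    refine lt_of_le_of_lt ?_ ht2
    rw [hux, inv_mul_eq_div, div_le_iff_of_neg hfv]
    exact hfL x hx t' ht1
  obtain ⟨g, hgL, hgN⟩ := exists_extension_of_le_sublinear
    (⟨L, (innerₛₗ ℝ u).domRestrict L⟩ : V →ₗ.[ℝ] ℝ) (fun x => s * N x)
    (fun r hr x => by
      simp only [hN.smul_eq, abs_of_pos hr]
      ring)
    (fun x y => by
      have := mul_le_mul_of_nonneg_left (hN.add_le x y) hs
      linarith)
    (fun x => huL x x.2)
  set w : V := (InnerProductSpace.toDual ℝ V).symm (LinearMap.toContinuousLinearMap g) with hw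
  have hwx : ∀ x, ⟪w, x⟫ = g x := fun x => by
    rw [hw, InnerProductSpace.toDual_symm_apply]
    rfl
  refine ⟨u - w, ?_, u, ?_, ?_, ?_⟩
  · refine (Submodule.mem_orthogonal' L _).2 fun x hx => ?_
    have : g x = ⟪u, x⟫ := hgL ⟨x, hx⟩
    rw [inner_sub_left, hwx, this, sub_self]
  · intro x hx
    rw [hux]
    exact mul_nonneg_of_nonpos_of_nonpos (inv_nonpos.2 hfv.le) (hK0 x hx)
  · rw [hux, inv_mul_cancel₀ hfv.ne]
  · rw [sub_sub_cancel]
    refine Real.sSup_le ?_ hs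
    rintro _ ⟨x, hx, rfl⟩
    have := hgN x
    rwa [hx, mul_one, ← hwx] at this

/-- Strong duality for fixed `v`. The predicate `P` stands for either of the constraints `‖x‖ ≤ 1`
and `‖x‖ = 1`, so the two primal suprema agree, being the least element of the same set. -/
lemma isLeast_sSup_lambdaVec (hN : IsNorm V N) (hK : IsRegularCone V K) {L : Submodule ℝ V}
    (hint : ((L : Set V) ∩ interior K).Nonempty) {v : V} (hv : v ∈ K) (hv0 : v ≠ 0)
    (P : ℝ → Prop) (hP : ∀ r, P r → r ≤ 1) (hP1 : P 1) :
    IsLeast {r : ℝ | ∃ y ∈ Lᗮ, ∃ u ∈ dualCone K, ⟪u, v⟫ = 1 ∧ r = dualNorm N (u - y)}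
      (sSup {c : ℝ | ∃ x ∈ L, P (N x) ∧ c = lambdaVec K v x}) := by
  obtain ⟨e, heL, heK⟩ := hint
  obtain ⟨u₀, hu₀, hu₀v⟩ := hK.exists_dual hv hv0
  have hbound : ∀ x ∈ L, ∀ t : ℝ, x - t • v ∈ K → t ≤ dualNorm N u₀ * N x := by
    intro x hx t ht
    simpa using weak_duality hN hu₀ hu₀v L.orthogonal.zero_mem hx ht
  have hlower : ∀ y ∈ Lᗮ, ∀ u ∈ dualCone K, ⟪u, v⟫ = 1 → ∀ x ∈ L, P (N x) →
      lambdaVec K v x ≤ dualNorm N (u - y) := by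
    intro y hy u hu huv x hx hPx
    have h0 := hN.dualNorm_nonneg (u - y)
    refine Real.sSup_le (fun t ht => ?_) h0
    exact (weak_duality hN hu huv hy hx ht).trans (mul_le_of_le_one_right h0 (hP _ hPx))
  set s := sSup {c : ℝ | ∃ x ∈ L, P (N x) ∧ c = lambdaVec K v x} with hs
  have hle : ∀ y ∈ Lᗮ, ∀ u ∈ dualCone K, ⟪u, v⟫ = 1 → s ≤ dualNorm N (u - y) := by
    intro y hy u hu huv
    refine Real.sSup_le ?_ (hN.dualNorm_nonneg _)
    rintro _ ⟨x, hx, hPx, rfl⟩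
    exact hlower y hy u hu huv x hx hPx
  have hbdd : BddAbove {c : ℝ | ∃ x ∈ L, P (N x) ∧ c = lambdaVec K v x} := by
    refine ⟨dualNorm N (u₀ - 0), ?_⟩
    rintro _ ⟨x, hx, hPx, rfl⟩
    exact hlower 0 L.orthogonal.zero_mem u₀ hu₀ hu₀v x hx hPx
  have key : ∀ x ∈ L, ∀ t : ℝ, x - t • v ∈ K → t ≤ s * N x := by
    intro x hx t ht
    rcases eq_or_ne x 0 with rfl | hx0
    · simpa [hN.map_zero] using hbound 0 hx t ht
    have hpos := hN.pos hx0
    have hmem : (N x)⁻¹ • x - ((N x)⁻¹ * t) • v ∈ K := by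
      have := hK.smul_mem (inv_pos.2 hpos) ht
      rwa [smul_sub, smul_smul] at this
    have hL : (N x)⁻¹ • x ∈ L := L.smul_mem _ hx
    have h1 : (N x)⁻¹ * t ≤ lambdaVec K v ((N x)⁻¹ • x) :=
      le_csSup ⟨_, fun r hr => hbound _ hL r hr⟩ hmem
    have h2 : lambdaVec K v ((N x)⁻¹ • x) ≤ s :=
      le_csSup hbdd ⟨_, hL, by rwa [hN.map_inv_smul hx0], rfl⟩
    have h3 := h1.trans h2
    rwa [inv_mul_eq_div, div_le_iff₀ hpos] at h3
  have hs0 : 0 ≤ s := by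
    -- A small multiple of `v` can be subtracted from the interior point `e`, so `0 < s * N e`.
    have hnhds : ∀ᶠ t in nhdsWithin (0 : ℝ) (Set.Ioi 0), e - t • v ∈ K := by
      have hcont : Filter.Tendsto (fun t : ℝ => e - t • v) (nhds 0) (nhds e) := by
        have : Continuous fun t : ℝ => e - t • v := by fun_prop
        simpa using this.tendsto 0
      exact (hcont.eventually (mem_interior_iff_mem_nhds.1 heK)).filter_mono nhdsWithin_le_nhds
    obtain ⟨t, ht, ht0⟩ := (hnhds.and self_mem_nhdsWithin).exists
    have h1 : 0 < s * N e := lt_of_lt_of_le ht0 (key e heL t ht)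
    exact (pos_of_mul_pos_left h1 (hN.nonneg e)).le
  constructor
  · obtain ⟨y, hy, u, hu, huv, hn⟩ := exists_dual_functional hN hK heL heK hs0 key
    exact ⟨y, hy, u, hu, huv, le_antisymm (hle y hy u hu huv) hn⟩
  · rintro _ ⟨y, hy, u, hu, huv, rfl⟩
    exact hle y hy u hu huv

end Duality

/-! ### Minimising over the direction -/

/-- If `L ∩ int K ≠ ∅` then
`σ(L) = min_{v ∈ K, |||v||| = 1} max_{x ∈ L, ‖x‖ = 1} λ_v(x)
      = min {‖u - y‖* : v ∈ K, y ∈ L^⊥, u ∈ K*, |||v||| = 1, ⟨u,v⟩ = 1}`. -/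
theorem stmt_11 {V : Type*} [NormedAddCommGroup V] [InnerProductSpace ℝ V]
    [FiniteDimensional ℝ V]
    (N N' : V → ℝ) (hN : IsNorm V N) (hN' : IsNorm V N')
    (K : Set V) (hK : IsRegularCone V K)
    (m : ℕ) (hm : m < finrank ℝ V)
    (L : Submodule ℝ V) (hL : finrank ℝ L = m)
    (hint : ((L : Set V) ∩ interior K).Nonempty) :
    sigmaMeas N N' K L =
      sInf {r : ℝ | ∃ v ∈ K, N' v = 1 ∧
        r = sSup {c : ℝ | ∃ x ∈ L, N x = 1 ∧ c = lambdaVec K v x}} ∧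
    sigmaMeas N N' K L =
      sInf {r : ℝ | ∃ v ∈ K, ∃ y ∈ Lᗮ, ∃ u ∈ dualCone K,
        N' v = 1 ∧ ⟪u, v⟫ = 1 ∧ r = dualNorm N (u - y)} := by
  have hv0 : ∀ v : V, N' v = 1 → v ≠ 0 := by
    rintro v hv rfl
    rw [hN'.map_zero] at hv
    exact zero_ne_one hv
  have h1 := fun v (hv : v ∈ K) (hv1 : N' v = 1) =>
    isLeast_sSup_lambdaVec hN hK hint hv (hv0 v hv1) (· ≤ 1) (fun _ h => h) le_rfl
  have h2 := fun v (hv : v ∈ K) (hv1 : N' v = 1) =>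
    isLeast_sSup_lambdaVec hN hK hint hv (hv0 v hv1) (· = 1) (fun _ h => le_of_eq h) rfl
  unfold sigmaMeas
  constructor
  · congr 1
    ext r
    refine exists_congr fun v => and_congr_right fun hv => and_congr_right fun hv1 => ?_
    rw [(h1 v hv hv1).unique (h2 v hv hv1)]
  · set A := {r : ℝ | ∃ v ∈ K, N' v = 1 ∧
      r = sSup {c : ℝ | ∃ x ∈ L, N x ≤ 1 ∧ c = lambdaVec K v x}} with hA
    set B := {r : ℝ | ∃ v ∈ K, ∃ y ∈ Lᗮ, ∃ u ∈ dualCone K,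
        N' v = 1 ∧ ⟪u, v⟫ = 1 ∧ r = dualNorm N (u - y)} with hB
    have hAB : A ⊆ B := by
      rintro _ ⟨v, hv, hv1, rfl⟩
      obtain ⟨y, hy, u, hu, huv, h⟩ := (h1 v hv hv1).1
      exact ⟨v, hv, y, hy, u, hu, hv1, huv, h⟩
    have hBA : ∀ r ∈ B, ∃ a ∈ A, a ≤ r := by
      rintro _ ⟨v, hv, y, hy, u, hu, hv1, huv, rfl⟩
      exact ⟨_, ⟨v, hv, hv1, rfl⟩, (h1 v hv hv1).2 ⟨y, hy, u, hu, huv, rfl⟩⟩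
    have hB0 : BddBelow B := by
      refine ⟨0, ?_⟩
      rintro _ ⟨v, hv, y, hy, u, hu, hv1, huv, rfl⟩
      exact hN.dualNorm_nonneg _
    rcases B.eq_empty_or_nonempty with hBe | hBn
    · have hAe : A = ∅ := Set.subset_empty_iff.1 (hAB.trans hBe.subset)
      rw [hAe, hBe]
    · obtain ⟨a, ha, -⟩ := hBA _ hBn.some_mem
      refine le_antisymm (le_csInf hBn fun r hr => ?_) (csInf_le_csInf hB0 ⟨a, ha⟩ hAB)
      obtain ⟨a, ha, har⟩ := hBA r hr
      exact (csInf_le (hB0.mono hAB) ha).trans har
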